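/- Let s ≥ 1 be an integer and let B = {x ∈ ℤ³ : x₁² + x₂² + x₃² ≤ s} be the ℓ_2 ball in ℤ³ of squared radius s. If there exists an additive subgroup Λ of ℤ³ such that the translates c + B, c ∈ Λ, partition ℤ³, then B = {x ∈ ℤ³ : x₁² + x₂² + x₃² ≤ t} for some t ∈ {1, 3}. Equivalently, there are no linear r-perfect codes in ℤ³ in the ℓ_2 metric unless r ∈ {1, √3}. -/

import Mathlib

/-!
Let `c` be a shortest nonzero vector of `Λ`. The balls around `0` and `c` are disjoint, so `4 * s`
exceeds `‖c‖²` by at most a linear term. Take a point `z` just outside both balls, close to `c / 2`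
on the bisecting plane of `0` and `c`. It lies in a third ball, whose centre `v` satisfies
`‖v‖, ‖v - c‖ ≥ ‖c‖` and is therefore at distance at least `√3 / 2 * ‖c‖` from `c / 2`; but this
distance is at most `√s + ‖z - c / 2‖`, which is smaller when `c` is long. For the finitely many
short `c`, up to symmetry, either a nearby `z` gives the same contradiction or a search tries all
centres of the balls that could cover a few points near `c / 2`.
-/

section SquaredNorm

variable {ι : Type*}

/-- `signedPerm u σ` permutes the coordinates by `σ` after changing their signs according to `u`. -/
def signedPerm (u : ι → ℤˣ) (σ : Equiv.Perm ι) : (ι → ℤ) ≃+ (ι → ℤ) :=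
  (AddEquiv.piCongrRight fun i => DistribMulAction.toAddEquiv ℤ (u i)).trans
    (LinearEquiv.funCongrLeft ℤ ℤ σ).toAddEquiv

theorem signedPerm_apply (u : ι → ℤˣ) (σ : Equiv.Perm ι) (v : ι → ℤ) (i : ι) :
    signedPerm u σ v i = u (σ i) • v (σ i) := rfl

variable [Fintype ι]

/-- The squared Euclidean norm on `ℤⁿ`. -/
def normSq (v : ι → ℤ) : ℤ := v ⬝ᵥ v

theorem normSq_fin_three (v : Fin 3 → ℤ) : normSq v = v 0 ^ 2 + v 1 ^ 2 + v 2 ^ 2 := by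
  simp only [normSq, dotProduct, Fin.sum_univ_three, sq]

theorem sq_le_normSq (v : ι → ℤ) (i : ι) : v i ^ 2 ≤ normSq v := by
  rw [sq]
  exact Finset.single_le_sum (f := fun j => v j * v j) (fun j _ => mul_self_nonneg _)
    (Finset.mem_univ i)

theorem normSq_nonneg (v : ι → ℤ) : 0 ≤ normSq v :=
  Finset.sum_nonneg fun _ _ => mul_self_nonneg _

theorem normSq_pos {v : ι → ℤ} : 0 < normSq v ↔ v ≠ 0 := by
  rw [(normSq_nonneg v).lt_iff_ne', normSq, Ne, dotProduct_self_eq_zero]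

theorem normSq_add (v w : ι → ℤ) : normSq (v + w) = normSq v + 2 * (v ⬝ᵥ w) + normSq w := by
  simp only [normSq, add_dotProduct, dotProduct_add, dotProduct_comm w v]
  ring

theorem normSq_add_self (v : ι → ℤ) : normSq (v + v) = 4 * normSq v := by
  rw [normSq_add, normSq]
  ring

theorem normSq_sub_comm (v w : ι → ℤ) : normSq (v - w) = normSq (w - v) := by
  rw [← neg_sub, normSq, neg_dotProduct_neg, normSq]

theorem sq_dotProduct_le (v w : ι → ℤ) : (v ⬝ᵥ w) ^ 2 ≤ normSq v * normSq w := by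
  simpa only [normSq, dotProduct, sq] using Finset.sum_mul_sq_le_sq_mul_sq Finset.univ v w

theorem four_mul_normSq (x c : ι → ℤ) :
    4 * normSq x = normSq c + 2 * (c ⬝ᵥ (x + x - c)) + normSq (x + x - c) := by
  rw [← normSq_add, add_sub_cancel, normSq_add, normSq]
  ring

theorem four_mul_normSq_sub (x c : ι → ℤ) :
    4 * normSq (x - c) = normSq c - 2 * (c ⬝ᵥ (x + x - c)) + normSq (x + x - c) := by
  simp only [normSq, sub_dotProduct, add_dotProduct, dotProduct_sub, dotProduct_add,
    dotProduct_comm c x]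
  ring

theorem normSq_signedPerm (u : ι → ℤˣ) (σ : Equiv.Perm ι) (v : ι → ℤ) :
    normSq (signedPerm u σ v) = normSq v := by
  simp only [normSq, dotProduct, signedPerm_apply, smul_mul_smul_comm, Int.units_mul_self, one_smul]
  exact Equiv.sum_comp σ fun i => v i * v i

theorem exists_signedPerm_antitone_nonneg {n : ℕ} (c : Fin n → ℤ) :
    ∃ u σ, Antitone (signedPerm u σ c) ∧ 0 ≤ signedPerm u σ c := by
  have exists_sign (x : ℤ) : ∃ u : ℤˣ, u • x = |x| := by
    rcases abs_choice x with hx | hx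
    · exact ⟨1, by rw [hx, one_smul]⟩
    · exact ⟨-1, by rw [hx, Units.neg_smul, one_smul]⟩
  choose u hu using fun i => exists_sign (c i)
  refine ⟨u, Tuple.sort fun i => -|c i|, fun i j hij => ?_, fun i => ?_⟩
  · simpa only [signedPerm_apply, hu, Function.comp_apply, neg_le_neg_iff] using
      Tuple.monotone_sort (fun i => -|c i|) hij
  · simp only [signedPerm_apply, hu, Pi.zero_apply, abs_nonneg]

end SquaredNorm

section PerfectCode

variable {ι : Type*} [Fintype ι] {s : ℤ} {Λ : AddSubgroup (ι → ℤ)} {c : ι → ℤ}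

/-- A linear perfect code of squared radius `s`: the balls of squared radius `s` around the points
of `Λ` partition `ℤⁿ`. -/
def IsPerfectCode (s : ℤ) (Λ : AddSubgroup (ι → ℤ)) : Prop :=
  ∀ z, ∃! c, c ∈ Λ ∧ normSq (z - c) ≤ s

/-- `c` is a shortest nonzero vector of `Λ`. -/
def IsShortest (Λ : AddSubgroup (ι → ℤ)) (c : ι → ℤ) : Prop :=
  c ∈ Λ ∧ c ≠ 0 ∧ ∀ v ∈ Λ, v ≠ 0 → normSq c ≤ normSq v

theorem IsPerfectCode.map (h : IsPerfectCode s Λ) {e : (ι → ℤ) ≃+ (ι → ℤ)}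
    (he : ∀ v, normSq (e v) = normSq v) : IsPerfectCode s (Λ.map e.toAddMonoidHom) := by
  intro z
  obtain ⟨c, ⟨hc, hzc⟩, unique⟩ := h (e.symm z)
  refine ⟨e c, ⟨AddSubgroup.mem_map_of_mem _ hc, ?_⟩, ?_⟩
  · rwa [← he, map_sub, e.apply_symm_apply] at hzc
  · rintro _ ⟨⟨d, hd, rfl⟩, hzd⟩
    refine congrArg e (unique d ⟨hd, ?_⟩)
    rwa [← he, map_sub, e.apply_symm_apply]

theorem IsShortest.map (hc : IsShortest Λ c) {e : (ι → ℤ) ≃+ (ι → ℤ)}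
    (he : ∀ v, normSq (e v) = normSq v) : IsShortest (Λ.map e.toAddMonoidHom) (e c) := by
  obtain ⟨hmem, hne, hmin⟩ := hc
  refine ⟨AddSubgroup.mem_map_of_mem _ hmem, e.map_ne_zero_iff.2 hne, ?_⟩
  rintro _ ⟨v, hv, rfl⟩ hv0
  exact (he c).trans_le ((hmin v hv (e.map_ne_zero_iff.1 hv0)).trans_eq (he v).symm)

theorem IsPerfectCode.exists_isShortest [Nonempty ι] (h : IsPerfectCode s Λ) :
    ∃ c, IsShortest Λ c := by
  classical
  have exists_ne_zero : ∃ v, v ∈ Λ ∧ v ≠ 0 := by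
    obtain ⟨i⟩ := ‹Nonempty ι›
    obtain ⟨v, ⟨hv, hzv⟩, -⟩ := h (Pi.single i (s + 1))
    refine ⟨v, hv, ?_⟩
    rintro rfl
    have := sq_le_normSq (Pi.single i (s + 1)) i
    rw [sub_zero] at hzv
    rw [Pi.single_eq_same] at this
    nlinarith
  obtain ⟨c, ⟨hc, hc0⟩, hmin⟩ := exists_minimalFor_of_wellFoundedLT
    (fun v => v ∈ Λ ∧ v ≠ 0) (fun v => (normSq v).toNat) exists_ne_zero
  refine ⟨c, hc, hc0, fun v hv hv0 => ?_⟩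
  by_contra! hlt
  exact (hmin ⟨hv, hv0⟩ (Int.toNat_le_toNat hlt.le)).not_gt
    ((Int.toNat_lt_toNat (normSq_pos.2 hc0)).2 hlt)

theorem IsPerfectCode.exists_isShortest_antitone_nonneg {n : ℕ} [NeZero n]
    {Λ : AddSubgroup (Fin n → ℤ)} (h : IsPerfectCode s Λ) :
    ∃ Λ' c, IsPerfectCode s Λ' ∧ IsShortest Λ' c ∧ Antitone c ∧ (0 : Fin n → ℤ) ≤ c := by
  obtain ⟨c, hc⟩ := h.exists_isShortest
  obtain ⟨u, σ, anti, nonneg⟩ := exists_signedPerm_antitone_nonneg c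
  exact ⟨_, _, h.map (normSq_signedPerm u σ), hc.map (normSq_signedPerm u σ), anti, nonneg⟩

theorem IsPerfectCode.lt_max (h : IsPerfectCode s Λ) (hc : c ∈ Λ) (hc0 : c ≠ 0) (x : ι → ℤ) :
    s < max (normSq x) (normSq (x - c)) := by
  by_contra! hx
  rw [max_le_iff] at hx
  exact hc0 ((h x).unique ⟨hc, hx.2⟩ ⟨Λ.zero_mem, by simpa only [sub_zero] using hx.1⟩)

theorem IsPerfectCode.four_mul_lt (h : IsPerfectCode s Λ) (hc : c ∈ Λ) (hc0 : c ≠ 0)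
    (x : ι → ℤ) :
    4 * s < normSq c + 2 * |c ⬝ᵥ (x + x - c)| + normSq (x + x - c) := by
  have abs_ge := le_abs_self (c ⬝ᵥ (x + x - c))
  have abs_ge_neg := neg_abs_le (c ⬝ᵥ (x + x - c))
  rcases lt_max_iff.1 (h.lt_max hc hc0 x) with hx | hx
  · linarith [four_mul_normSq x c]
  · linarith [four_mul_normSq_sub x c]

theorem IsPerfectCode.exists_third_center (h : IsPerfectCode s Λ) (hc : IsShortest Λ c)
    {z : ι → ℤ} (hz : s < normSq z) (hzc : s < normSq (z - c)) :
    ∃ v, normSq (z - v) ≤ s ∧ 3 * normSq c ≤ normSq (v + v - c) := by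
  obtain ⟨v, ⟨hv, hzv⟩, -⟩ := h z
  refine ⟨v, hzv, ?_⟩
  have v_ne_zero : v ≠ 0 := by
    rintro rfl
    rw [sub_zero] at hzv
    exact hz.not_ge hzv
  have v_ne_c : v ≠ c := by
    rintro rfl
    exact hzc.not_ge hzv
  have le_v := hc.2.2 v hv v_ne_zero
  have le_v_sub := hc.2.2 (v - c) (Λ.sub_mem hv hc.1) (sub_ne_zero.2 v_ne_c)
  linarith [four_mul_normSq v c, four_mul_normSq_sub v c]

/-- `z` lies outside the balls of squared radius `S` around `0` and `c`, but so close to `c / 2`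
that a ball containing it has its centre at distance less than `√3 / 2 * ‖c‖` from `c / 2`: the
last two conditions say that `2 * √S + ‖2 * z - c‖ < √3 * ‖c‖`. -/
def IsWaistPoint (S : ℤ) (c z : ι → ℤ) : Prop :=
  S < normSq z ∧ S < normSq (z - c) ∧
    0 < 3 * normSq c - normSq (z + z - c) - 4 * S ∧
    16 * S * normSq (z + z - c) < (3 * normSq c - normSq (z + z - c) - 4 * S) ^ 2

instance (S : ℤ) (c z : ι → ℤ) : Decidable (IsWaistPoint S c z) :=
  inferInstanceAs (Decidable (_ ∧ _ ∧ _ ∧ _))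

theorem IsPerfectCode.not_isWaistPoint (h : IsPerfectCode s Λ) (hc : IsShortest Λ c) {S : ℤ}
    (hs : s ≤ S) (z : ι → ℤ) : ¬ IsWaistPoint S c z := by
  rintro ⟨hz, hzc, gap_pos, hlt⟩
  obtain ⟨v, hzv, far⟩ := h.exists_third_center hc (hs.trans_lt hz) (hs.trans_lt hzc)
  rw [normSq_sub_comm] at hzv
  have expand : normSq (v + v - c) =
      4 * normSq (v - z) + 4 * ((v - z) ⬝ᵥ (z + z - c)) + normSq (z + z - c) := by
    rw [show v + v - c = v - z + (v - z) + (z + z - c) by abel, normSq_add, normSq_add_self,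
      add_dotProduct]
    ring
  have gap_le : 3 * normSq c - normSq (z + z - c) - 4 * S ≤ 4 * ((v - z) ⬝ᵥ (z + z - c)) := by
    linarith
  refine hlt.not_ge ?_
  calc (3 * normSq c - normSq (z + z - c) - 4 * S) ^ 2
      ≤ (4 * ((v - z) ⬝ᵥ (z + z - c))) ^ 2 := pow_le_pow_left₀ gap_pos.le gap_le 2
    _ ≤ 16 * (normSq (v - z) * normSq (z + z - c)) := by
      linarith [sq_dotProduct_le (v - z) (z + z - c)]
    _ ≤ 16 * (S * normSq (z + z - c)) := by
      have := normSq_nonneg (z + z - c)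
      gcongr
      exact hzv.trans hs
    _ = 16 * S * normSq (z + z - c) := by ring

/-- With the weights `24 : 40`, this says `(2 * √S + ‖2 * z - c‖)² < 3 * ‖c‖²` after estimating the
cross term by the inequality of arithmetic and geometric means. -/
theorem isWaistPoint_of_lt {S : ℤ} (hS : 0 ≤ S) {z : ι → ℤ} (hz : S < normSq z)
    (hzc : S < normSq (z - c))
    (hlt : 24 * (4 * S) + 40 * normSq (z + z - c) < 45 * normSq c) : IsWaistPoint S c z := by
  refine ⟨hz, hzc, ?_⟩
  have d_nonneg := normSq_nonneg (z + z - c)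
  generalize normSq (z + z - c) = d at *
  set q := 3 * normSq c - d - 4 * S
  have lt_gap : 36 * S + 25 * d < 15 * q := by linarith
  have sq_lt : (36 * S + 25 * d) ^ 2 < (15 * q) ^ 2 := by gcongr
  constructor <;> linarith [sq_nonneg (36 * S - 25 * d)]

end PerfectCode

section Search

variable {Λ : AddSubgroup (Fin 3 → ℤ)} {c : Fin 3 → ℤ}

/-- The points of `ℤ³` with all coordinates in `l`. -/
def cube (l : List ℤ) : List (Fin 3 → ℤ) :=
  l.flatMap fun x => l.flatMap fun y => l.map fun z => ![x, y, z]

theorem mem_cube {l : List ℤ} {v : Fin 3 → ℤ} (hv : ∀ i, v i ∈ l) : v ∈ cube l :=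
  List.mem_flatMap.2 ⟨_, hv 0, List.mem_flatMap.2 ⟨_, hv 1, List.mem_map.2
    ⟨_, hv 2, FinVec.etaExpand_eq v⟩⟩⟩

/-- The points of `ℤ³` of squared norm at most `s`. -/
def ballPoints (s : ℕ) : List (Fin 3 → ℤ) :=
  (cube (Int.range (-Nat.sqrt s) (Nat.sqrt s + 1))).filter (normSq · ≤ s)

theorem mem_ballPoints {s : ℕ} {v : Fin 3 → ℤ} (hv : normSq v ≤ s) : v ∈ ballPoints s := by
  refine List.mem_filter.2 ⟨mem_cube fun i => Int.mem_range_iff.2 ?_, decide_eq_true hv⟩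
  have sq_le : (v i).natAbs ^ 2 ≤ s := by
    zify
    exact (sq_abs (v i)).trans_le ((sq_le_normSq v i).trans hv)
  have := Nat.le_sqrt'.2 sq_le
  omega

/-- A test which, when positive, exhibits a common point of the balls of squared radius `s` around
`0` and `d`; the points tried are the roundings of `d / 2`. -/
def ballsMeet (s : ℕ) (d : Fin 3 → ℤ) : Bool :=
  (cube [0, 1]).any fun ε =>
    let x : Fin 3 → ℤ := fun i => (d i + ε i) / 2
    normSq x ≤ s && normSq (x - d) ≤ s

theorem IsPerfectCode.not_ballsMeet {s : ℕ} (h : IsPerfectCode s Λ) {d : Fin 3 → ℤ} (hd : d ∈ Λ)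
    (hd0 : d ≠ 0) : ¬ ballsMeet s d := by
  intro meet
  obtain ⟨ε, -, hε⟩ := List.any_eq_true.1 meet
  rw [Bool.and_eq_true, decide_eq_true_iff, decide_eq_true_iff] at hε
  exact (h.lt_max hd hd0 _).not_ge (max_le_iff.2 hε)

/-- A test which, when positive, shows that `v` cannot be the centre of a ball if the points of `L`
are: some `v - l ≠ 0` has squared norm less than `n`, the squared length of a shortest vector, or
the balls around `v` and some other point of `L` meet. -/
def clashes (s : ℕ) (n : ℤ) (L : List (Fin 3 → ℤ)) (v : Fin 3 → ℤ) : Bool :=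
  L.any (fun l => 0 < normSq (v - l) && normSq (v - l) < n) ||
    L.any fun l => 0 < normSq (v - l) && ballsMeet s (v - l)

theorem IsPerfectCode.not_clashes {s : ℕ} (h : IsPerfectCode s Λ) (hc : IsShortest Λ c)
    {L : List (Fin 3 → ℤ)} (hL : ∀ l ∈ L, l ∈ Λ) {v : Fin 3 → ℤ} (hv : v ∈ Λ) :
    ¬ clashes s (normSq c) L v := by
  simp only [clashes, Bool.or_eq_true, List.any_eq_true, Bool.and_eq_true, decide_eq_true_iff,
    normSq_pos, not_or, not_exists, not_and]
  exact ⟨fun l hl hne => (hc.2.2 _ (Λ.sub_mem hv (hL l hl)) hne).not_gt,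
    fun l hl hne => h.not_ballsMeet (Λ.sub_mem hv (hL l hl)) hne⟩

/-- Assuming that the points of `L` are centres of balls, take a point of `P` covered by none of
these balls and try all possible centres `v` of the ball covering it, adding `v` and its
translates by `L` to the known centres. The answer `true` means that all choices fail within `k`
rounds. -/
def refutes (s : ℕ) (n : ℤ) (P : List (Fin 3 → ℤ)) : ℕ → List (Fin 3 → ℤ) → Bool
  | 0, _ => false
  | k + 1, L => (P.find? fun z => L.all fun l => s < normSq (z - l)).any fun z =>
      (ballPoints s).all fun u =>
        clashes s n L (z + u) || refutes s n P k (L ++ L.map (· + (z + u)) ++ L.map (· - (z + u)))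

theorem IsPerfectCode.not_refutes {s : ℕ} (h : IsPerfectCode s Λ) (hc : IsShortest Λ c)
    {P : List (Fin 3 → ℤ)} (k : ℕ) {L : List (Fin 3 → ℤ)} (hL : ∀ l ∈ L, l ∈ Λ) :
    ¬ refutes s (normSq c) P k L := by
  induction k generalizing L with
  | zero => exact Bool.false_ne_true
  | succ k ih =>
    intro refuted
    obtain ⟨z, -, all_fail⟩ := (Option.any_eq_true _ _).1 refuted
    obtain ⟨v, ⟨hv, hzv⟩, -⟩ := h z
    have v_fails := List.all_eq_true.1 all_fail (v - z)
      (mem_ballPoints (by rwa [normSq_sub_comm]))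
    rw [add_sub_cancel, Bool.or_eq_true] at v_fails
    refine v_fails.elim (h.not_clashes hc hL hv) (ih ?_)
    simp only [List.mem_append, List.mem_map]
    rintro _ ((hl | ⟨l, hl, rfl⟩) | ⟨l, hl, rfl⟩)
    · exact hL _ hl
    · exact Λ.add_mem (hL l hl) hv
    · exact Λ.sub_mem (hL l hl) hv

/-- The rounding of `c / 2 + 3 / 10 * (-c₁, c₀, 0)`, a point of the plane bisecting `0` and `c`. For
long `c` any factor between `0` and `(√3 - 1) / 2` would do in place of `3 / 10`. -/
def waistPoint (c : Fin 3 → ℤ) : Fin 3 → ℤ :=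
  ![(5 * c 0 - 3 * c 1 + 5) / 10, (5 * c 1 + 3 * c 0 + 5) / 10, c 2 / 2]

/-- The lattice points next to `waistPoint c`. -/
def waistCandidates (c : Fin 3 → ℤ) : List (Fin 3 → ℤ) :=
  (cube [0, 1, -1]).map (waistPoint c + ·)

/-- A test which, when positive, shows that no linear perfect code of squared radius at most `S`,
other than `1` and `3`, has the shortest vector `c`. A waist point for one radius disposes of all
smaller ones. -/
def excludes (c : Fin 3 → ℤ) : ℕ → Bool
  | 0 => true
  | s + 1 => (waistCandidates c).any (fun z => IsWaistPoint (s + 1 : ℕ) c z) ||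
      (s == 0 || s == 2 || ballsMeet (s + 1) c ||
        refutes (s + 1) (normSq c) (waistCandidates c) 3 [0, c, -c]) && excludes c s

theorem IsPerfectCode.not_excludes {s : ℕ} (h : IsPerfectCode s Λ) (hc : IsShortest Λ c)
    (hs : s ≠ 0) (hs1 : s ≠ 1) (hs3 : s ≠ 3) {S : ℕ} (hsS : s ≤ S) : ¬ excludes c S := by
  induction S with
  | zero => exact absurd (Nat.le_zero.1 hsS) hs
  | succ S ih =>
    simp only [excludes, Bool.or_eq_true, List.any_eq_true, decide_eq_true_iff, Bool.and_eq_true,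
      beq_iff_eq]
    rintro (⟨z, -, hz⟩ | ⟨excluded_here, excluded_below⟩)
    · exact h.not_isWaistPoint hc (Nat.cast_le.2 hsS) z hz
    rcases hsS.lt_or_eq with hlt | rfl
    · exact ih (Nat.lt_succ_iff.1 hlt) excluded_below
    rcases excluded_here with ((hS | hS) | meet) | refuted
    · omega
    · omega
    · exact h.not_ballsMeet hc.1 hc.2.1 meet
    · refine h.not_refutes hc 3 ?_ refuted
      simp only [List.mem_cons, List.not_mem_nil, or_false]
      rintro _ (rfl | rfl | rfl)
      exacts [Λ.zero_mem, hc.1, Λ.neg_mem hc.1]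

end Search

section DimensionThree

variable {s : ℤ} {Λ : AddSubgroup (Fin 3 → ℤ)} {c : Fin 3 → ℤ}

theorem dotProduct_fin_three (v w : Fin 3 → ℤ) :
    v ⬝ᵥ w = v 0 * w 0 + v 1 * w 1 + v 2 * w 2 :=
  Fin.sum_univ_three _

theorem exists_near_midpoint (anti : Antitone c) (nonneg : 0 ≤ c) :
    ∃ x, |c ⬝ᵥ (x + x - c)| ≤ c 0 ∧ normSq (x + x - c) ≤ 3 := by
  have h10 : c 1 ≤ c 0 := anti (by decide)
  have h21 : c 2 ≤ c 1 := anti (by decide)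
  have h2 : 0 ≤ c 2 := nonneg 2
  -- Opposite signs let the terms of the scalar product compensate each other.
  obtain ⟨x, hx⟩ : ∃ x : Fin 3 → ℤ, x + x - c = ![0, c 1 % 2, -(c 2 % 2)] ∨
      x + x - c = ![1, -(c 1 % 2), -(c 2 % 2)] := by
    rcases Int.emod_two_eq (c 0) with even | odd
    · refine ⟨![c 0 / 2, (c 1 + 1) / 2, c 2 / 2], .inl ?_⟩
      ext i
      fin_cases i <;> simp only [Pi.sub_apply, Pi.add_apply, Fin.zero_eta, Fin.mk_one,
        Fin.reduceFinMk, Matrix.cons_val] <;> omega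
    · refine ⟨![(c 0 + 1) / 2, c 1 / 2, c 2 / 2], .inr ?_⟩
      ext i
      fin_cases i <;> simp only [Pi.sub_apply, Pi.add_apply, Fin.zero_eta, Fin.mk_one,
        Fin.reduceFinMk, Matrix.cons_val] <;> omega
  refine ⟨x, ?_⟩
  rw [abs_le, normSq_fin_three, dotProduct_fin_three]
  rcases hx with hx | hx <;> rcases Int.emod_two_eq (c 1) with h1 | h1 <;>
    rcases Int.emod_two_eq (c 2) with h2 | h2 <;>
    simp only [hx, h1, h2, neg_zero, Matrix.cons_val] <;> omega

theorem IsPerfectCode.four_mul_le (h : IsPerfectCode s Λ) (hc : c ∈ Λ) (hc0 : c ≠ 0)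
    (anti : Antitone c) (nonneg : 0 ≤ c) : 4 * s ≤ normSq c + 2 * c 0 + 2 := by
  obtain ⟨x, hdot, hx⟩ := exists_near_midpoint anti nonneg
  linarith [h.four_mul_lt hc hc0 x]

theorem abs_sq_sub_sq_le {R : Type*} [CommRing R] [LinearOrder R] [IsStrictOrderedRing R]
    {a b r : R} (h : |a - b| ≤ r) : |a ^ 2 - b ^ 2| ≤ r * (2 * |b| + r) := by
  have sum_le : |a + b| ≤ 2 * |b| + r :=
    calc |a + b| = |2 * b + (a - b)| := by ring_nf
      _ ≤ |2 * b| + |a - b| := abs_add_le _ _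
      _ ≤ 2 * |b| + r := by rw [abs_mul, abs_two]; gcongr
  have r_nonneg := (abs_nonneg _).trans h
  rw [sq_sub_sq, abs_mul, mul_comm]
  gcongr

theorem abs_waistPoint_add_self_sub_le (c : Fin 3 → ℤ) :
    |5 * (waistPoint c + waistPoint c - c) 0 - -(3 * c 1)| ≤ 5 ∧
      |5 * (waistPoint c + waistPoint c - c) 1 - 3 * c 0| ≤ 5 ∧
      |(waistPoint c + waistPoint c - c) 2| ≤ 1 := by
  simp only [waistPoint, Pi.add_apply, Pi.sub_apply, Matrix.cons_val, abs_le]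
  omega

theorem abs_dotProduct_waistPoint_le (nonneg : 0 ≤ c) :
    |c ⬝ᵥ (waistPoint c + waistPoint c - c)| ≤ c 0 + c 1 + c 2 := by
  obtain ⟨h0, h1, h2⟩ := abs_waistPoint_add_self_sub_le c
  set w := waistPoint c + waistPoint c - c
  have expand : 5 * (c ⬝ᵥ w) =
      c 0 * (5 * w 0 - -(3 * c 1)) + c 1 * (5 * w 1 - 3 * c 0) + c 2 * (5 * w 2) := by
    rw [dotProduct_fin_three]
    ring
  have abs_mul_le (i : Fin 3) {x : ℤ} (hx : |x| ≤ 5) : |c i * x| ≤ c i * 5 := by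
    rw [abs_mul, abs_of_nonneg (nonneg i)]
    exact mul_le_mul_of_nonneg_left hx (nonneg i)
  have h2' : |5 * w 2| ≤ 5 := by
    rw [abs_mul]
    exact mul_le_mul_of_nonneg_left h2 (abs_nonneg 5)
  have key : |5 * (c ⬝ᵥ w)| ≤ c 0 * 5 + c 1 * 5 + c 2 * 5 := by
    rw [expand]
    exact (abs_add_three _ _ _).trans
      (add_le_add_three (abs_mul_le 0 h0) (abs_mul_le 1 h1) (abs_mul_le 2 h2'))
  rw [abs_mul, abs_of_pos (by decide)] at key
  linarith

theorem normSq_waistPoint_bounds (nonneg : 0 ≤ c) :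
    9 * (c 0 ^ 2 + c 1 ^ 2) - (30 * (c 0 + c 1) + 50) ≤
        25 * normSq (waistPoint c + waistPoint c - c) ∧
      25 * normSq (waistPoint c + waistPoint c - c) ≤
        9 * (c 0 ^ 2 + c 1 ^ 2) + (30 * (c 0 + c 1) + 75) := by
  obtain ⟨h0, h1, h2⟩ := abs_waistPoint_add_self_sub_le c
  set w := waistPoint c + waistPoint c - c
  have sq0 := abs_le.1 (abs_sq_sub_sq_le h0)
  have sq1 := abs_le.1 (abs_sq_sub_sq_le h1)
  have sq2 : w 2 ^ 2 ≤ 1 := (sq_le_one_iff_abs_le_one _).2 h2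
  rw [abs_neg, abs_of_nonneg (mul_nonneg zero_le_three (nonneg 1))] at sq0
  rw [abs_of_nonneg (mul_nonneg zero_le_three (nonneg 0))] at sq1
  rw [normSq_fin_three]
  constructor <;> linarith [sq_nonneg (w 2)]

theorem isWaistPoint_waistPoint (hs : 0 ≤ s) (anti : Antitone c) (nonneg : 0 ≤ c)
    (large : 18 ≤ c 0) (hsc : 4 * s ≤ normSq c + 2 * c 0 + 2) :
    IsWaistPoint s c (waistPoint c) := by
  have h21 : c 2 ≤ c 1 := anti (by decide)
  have sq_c0 : 18 * c 0 ≤ c 0 ^ 2 := by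
    rw [sq]
    exact mul_le_mul_of_nonneg_right large (nonneg 0)
  have hdot := abs_le.1 (abs_dotProduct_waistPoint_le nonneg)
  obtain ⟨le_norm, norm_le⟩ := normSq_waistPoint_bounds nonneg
  have hz := four_mul_normSq (waistPoint c) c
  have hzc := four_mul_normSq_sub (waistPoint c) c
  have outside : 130 * c 0 + 80 * c 1 + 50 * c 2 + 100 < 9 * (c 0 ^ 2 + c 1 ^ 2) := by
    linarith [sq_nonneg (9 * c 1 - 65)]
  have near : 24 * (2 * c 0 + 2) + 40 * normSq (waistPoint c + waistPoint c - c) <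
      21 * normSq c := by
    rw [normSq_fin_three c]
    linarith [sq_nonneg (6 * c 1 - 25), sq_nonneg (c 2)]
  apply isWaistPoint_of_lt hs <;> linarith

theorem excludes_cast_of_lt : ∀ x < 18, ∀ y ≤ x, ∀ t ≤ y,
    let c : Fin 3 → ℤ := ![(x : ℕ), (y : ℕ), (t : ℕ)]
    excludes c ((normSq c + 2 * c 0 + 2) / 4).toNat := by
  decide +kernel

theorem excludes_of_lt (anti : Antitone c) (nonneg : 0 ≤ c) (small : c 0 < 18) :
    excludes c ((normSq c + 2 * c 0 + 2) / 4).toNat := by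
  have h10 : c 1 ≤ c 0 := anti (by decide)
  have h21 : c 2 ≤ c 1 := anti (by decide)
  lift c to Fin 3 → ℕ using nonneg
  have coords : (fun i => (c i : ℤ)) = ![(c 0 : ℤ), (c 1 : ℤ), (c 2 : ℤ)] :=
    (FinVec.etaExpand_eq _).symm
  rw [coords]
  exact excludes_cast_of_lt _ (Nat.cast_lt.1 small) _ (Nat.cast_le.1 h10) _
    (Nat.cast_le.1 h21)

theorem IsPerfectCode.eq_one_or_three (h : IsPerfectCode s Λ) (hs : 1 ≤ s) : s = 1 ∨ s = 3 := by
  obtain ⟨Λ', c, h', hc, anti, nonneg⟩ := h.exists_isShortest_antitone_nonneg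
  have packing := h'.four_mul_le hc.1 hc.2.1 anti nonneg
  lift s to ℕ using by linarith
  rcases le_or_gt 18 (c 0) with large | small
  · exact absurd (isWaistPoint_waistPoint s.cast_nonneg anti nonneg large packing)
      (h'.not_isWaistPoint hc le_rfl _)
  · by_contra! hs13
    exact h'.not_excludes hc (by omega) (by omega) (by omega) (by omega)
      (excludes_of_lt anti nonneg small)

end DimensionThree

/-- If the translates of the `ℓ_2` ball `B = {x ∈ ℤ³ : x₁² + x₂² + x₃² ≤ s}` by an
additive subgroup `Λ` of `ℤ³` partition `ℤ³`, then `B` is the ℓ₂ ball of squared radius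
`t ∈ {1, 3}`: there are no linear `r`-perfect codes in `ℤ³` in the `ℓ_2` metric unless
`r ∈ {1, √3}`. -/
theorem perfect_codes_Z3_l2 (s : ℤ) (hs : 1 ≤ s) (Λ : AddSubgroup (Fin 3 → ℤ))
    (h : ∀ z : Fin 3 → ℤ, ∃! c, c ∈ Λ ∧
        (z 0 - c 0) ^ 2 + (z 1 - c 1) ^ 2 + (z 2 - c 2) ^ 2 ≤ s) :
    ∃ t ∈ ({1, 3} : Set ℤ),
      {x : Fin 3 → ℤ | (x 0) ^ 2 + (x 1) ^ 2 + (x 2) ^ 2 ≤ s} =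
      {x : Fin 3 → ℤ | (x 0) ^ 2 + (x 1) ^ 2 + (x 2) ^ 2 ≤ t} := by
  have perfect : IsPerfectCode s Λ := fun z => by
    simpa only [normSq_fin_three, Pi.sub_apply] using h z
  exact ⟨s, perfect.eq_one_or_three hs, rfl⟩
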